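/- arXiv:1606.04660 — 6 statements merged into one kernel-verified Lean document; each statement's English description precedes it below -/
import Mathlib

section
/- In the abstract VMS setup, the map v ↦ v − C v restricted to V_H is an injective linear map whose range is exactly the multiscale test space W_H; moreover I_H(v − C v) = v for every v ∈ V_H. In particular W_H and V_H have the same (finite) dimension. -/
/-- The multiscale test space `W_H := {w ∈ V_h : a v w = 0 for all v ∈ R}`. -/
def testSpace {V : Type*} [NormedAddCommGroup V] [InnerProductSpace ℝ V]
    (a : V →ₗ[ℝ] V →ₗ[ℝ] ℝ) (R : Submodule ℝ V) : Submodule ℝ V where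
  carrier := {w | ∀ v ∈ R, a v w = 0}
  add_mem' := by
    intro x y hx hy v hv
    simp [map_add, hx v hv, hy v hv]
  zero_mem' := by
    intro v hv
    simp
  smul_mem' := by
    intro c x hx v hv
    simp [hx v hv]

/-!
The corrector splits every `v` as `C v + (v - C v)` with summands in `R_H` and `W_H`, and coercivity
makes `R_H` and `W_H` disjoint, so `W_H` is a complement of `R_H`. Since `I_H` is idempotent, `V_H`
is a complement of `R_H` too. Two complements of the same submodule are identified by projecting
along it: `v ↦ v - C v` is the projection onto `W_H`, and its inverse is the projection `I_H` onto
`V_H`.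
-/

section Complements

variable {R M : Type*} [Ring R] [AddCommGroup M] [Module R M] {p q q' : Submodule R M}

/-- The isomorphism between two complements `q` and `q'` of a submodule `p` which maps `x : q` to
its projection onto `q'` along `p`. It is encoded as the composite `q ≃ M ⧸ p ≃ q'`. -/
noncomputable def linearEquivOfIsCompl (hq : IsCompl p q) (hq' : IsCompl p q') : q ≃ₗ[R] q' :=
  (p.quotientEquivOfIsCompl q hq).symm ≪≫ₗ p.quotientEquivOfIsCompl q' hq'

theorem coe_linearEquivOfIsCompl_apply (hq : IsCompl p q) (hq' : IsCompl p q') (x : q) :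
    (linearEquivOfIsCompl hq hq' x : M) = q'.projection p hq'.symm x :=
  rfl

theorem coe_linearEquivOfIsCompl_symm_apply (hq : IsCompl p q) (hq' : IsCompl p q') (y : q') :
    ((linearEquivOfIsCompl hq hq').symm y : M) = q.projection p hq.symm y :=
  rfl

theorem isCompl_of_forall_exists_sub_mem (hpq : Disjoint p q)
    (h : ∀ v, ∃ r ∈ p, v - r ∈ q) : IsCompl p q := by
  refine ⟨hpq, codisjoint_iff.mpr (Submodule.eq_top_iff'.mpr fun v ↦ ?_)⟩
  obtain ⟨r, hr, hvr⟩ := h v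
  exact Submodule.mem_sup.mpr ⟨r, hr, v - r, hvr, add_sub_cancel r v⟩

theorem projection_eq_sub_of_mem (h : IsCompl q p) {v r : M} (hr : r ∈ p) (hvr : v - r ∈ q) :
    q.projection p h v = v - r :=
  calc q.projection p h v
      = q.projection p h (v - r) + q.projection p h r := by rw [← map_add, sub_add_cancel]
    _ = v - r := by
      rw [Submodule.projection_apply_of_mem_left h hvr,
        Submodule.projection_apply_of_mem_right h hr, add_zero]

end Complements

section Corrector

open LinearMap

variable {R S M L : Type*} [CommRing R] [CommRing S] [AddCommGroup M] [Module R M]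
  [AddCommGroup L] [Module S L] {σ τ : R →+* S}

theorem disjoint_orthogonalBilin_of_definite {a : M →ₛₗ[σ] M →ₛₗ[τ] L} {p : Submodule R M}
    (ha : ∀ v ∈ p, a v v = 0 → v = 0) : Disjoint p (p.orthogonalBilin a) :=
  Submodule.disjoint_def.mpr fun v hv hv' ↦ ha v hv (hv' v hv)

theorem sub_mem_orthogonalBilin_iff {a : M →ₛₗ[σ] M →ₛₗ[τ] L} {p : Submodule R M} {v r : M} :
    v - r ∈ p.orthogonalBilin a ↔ ∀ w ∈ p, a w r = a w v := by
  simp only [Submodule.mem_orthogonalBilin_iff, map_sub, sub_eq_zero, eq_comm (a := a _ v)]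

theorem exists_linearEquiv_orthogonalBilin_ker {a : M →ₛₗ[σ] M →ₛₗ[τ] L} {P : M →ₗ[R] M}
    (ha : Disjoint (ker P) ((ker P).orthogonalBilin a)) (hP : IsIdempotentElem P) {C : M → M}
    (hC_mem : ∀ v, C v ∈ ker P) (hC : ∀ v, ∀ w ∈ ker P, a w (C v) = a w v) :
    ∃ e : range P ≃ₗ[R] (ker P).orthogonalBilin a,
      (∀ v, (e v : M) = v - C v) ∧ ∀ w, (e.symm w : M) = P w := by
  have hsub (v : M) : v - C v ∈ (ker P).orthogonalBilin a :=
    sub_mem_orthogonalBilin_iff.mpr (hC v)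
  have hcompl : IsCompl (ker P) ((ker P).orthogonalBilin a) :=
    isCompl_of_forall_exists_sub_mem ha fun v ↦ ⟨C v, hC_mem v, hsub v⟩
  refine ⟨linearEquivOfIsCompl hP.isCompl.symm hcompl, fun v ↦ ?_, fun w ↦ ?_⟩
  · rw [coe_linearEquivOfIsCompl_apply, projection_eq_sub_of_mem hcompl.symm (hC_mem v) (hsub v)]
  · rw [coe_linearEquivOfIsCompl_symm_apply, ← hP.eq_projection]

theorem idealTestSpace_properties_general (a : M →ₛₗ[σ] M →ₛₗ[τ] L) (P : M →ₗ[R] M)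
    (ha : Disjoint (ker P) ((ker P).orthogonalBilin a)) (hP : IsIdempotentElem P) (C : M → M)
    (hC_mem : ∀ v, C v ∈ ker P) (hC : ∀ v, ∀ w ∈ ker P, a w (C v) = a w v) :
    (∀ v₁ ∈ range P, ∀ v₂ ∈ range P, v₁ - C v₁ = v₂ - C v₂ → v₁ = v₂) ∧
    (∀ v₁ ∈ range P, ∀ v₂ ∈ range P, v₁ + v₂ - C (v₁ + v₂) = (v₁ - C v₁) + (v₂ - C v₂)) ∧
    (∀ c : R, ∀ v ∈ range P, c • v - C (c • v) = c • (v - C v)) ∧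
    {x | ∃ v ∈ range P, v - C v = x} = ((ker P).orthogonalBilin a : Set M) ∧
    (∀ v ∈ range P, P (v - C v) = v) ∧
    Module.rank R ((ker P).orthogonalBilin a) = Module.rank R (range P) := by
  obtain ⟨e, he, he_symm⟩ := exists_linearEquiv_orthogonalBilin_ker ha hP hC_mem hC
  have he_mk {v : M} (hv : v ∈ range P) : v - C v = e ⟨v, hv⟩ := (he ⟨v, hv⟩).symm
  have hleft (v : M) (hv : v ∈ range P) : P (v - C v) = v := by
    rw [he_mk hv, ← he_symm, e.symm_apply_apply]
  refine ⟨fun v₁ h₁ v₂ h₂ h ↦ ?_, fun v₁ h₁ v₂ h₂ ↦ ?_, fun c v hv ↦ ?_, ?_, hleft,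
    e.rank_eq.symm⟩
  · rw [← hleft v₁ h₁, h, hleft v₂ h₂]
  · rw [he_mk h₁, he_mk h₂, he_mk (add_mem h₁ h₂), ← Submodule.coe_add, ← map_add]
    rfl
  · rw [he_mk hv, he_mk (Submodule.smul_mem _ c hv), ← Submodule.coe_smul, ← map_smul]
    rfl
  · refine Set.Subset.antisymm ?_ fun w hw ↦ ?_
    · rintro _ ⟨v, hv, rfl⟩
      exact he_mk hv ▸ (e ⟨v, hv⟩).2
    · refine ⟨e.symm ⟨w, hw⟩, (e.symm ⟨w, hw⟩).2, ?_⟩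
      rw [← he, e.apply_symm_apply]

end Corrector

theorem eq_zero_of_mul_norm_sq_le_zero {E : Type*} [NormedAddCommGroup E] {ε : ℝ} (hε : 0 < ε)
    {v : E} (hv : ε * ‖v‖ ^ 2 ≤ 0) : v = 0 := by
  have hsq : ‖v‖ ^ 2 ≤ 0 := nonpos_of_mul_nonpos_right hv hε
  exact norm_eq_zero.mp (pow_eq_zero_iff two_ne_zero |>.mp (hsq.antisymm (sq_nonneg _)))

theorem testSpace_eq_orthogonalBilin {V : Type*} [NormedAddCommGroup V] [InnerProductSpace ℝ V]
    (a : V →ₗ[ℝ] V →ₗ[ℝ] ℝ) (p : Submodule ℝ V) : testSpace a p = p.orthogonalBilin a :=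
  rfl

theorem disjoint_testSpace_of_coercive {V : Type*} [NormedAddCommGroup V] [InnerProductSpace ℝ V]
    {a : V →ₗ[ℝ] V →ₗ[ℝ] ℝ} {ε : ℝ} (hε : 0 < ε) (p : Submodule ℝ V)
    (ha : ∀ v ∈ p, ε * ‖v‖ ^ 2 ≤ a v v) : Disjoint p (testSpace a p) := by
  rw [testSpace_eq_orthogonalBilin]
  exact disjoint_orthogonalBilin_of_definite fun v hv h ↦
    eq_zero_of_mul_norm_sq_le_zero hε (h ▸ ha v hv)

/-- **The ideal test space via the corrector.**
In the abstract VMS setup (`V_h` a finite-dimensional real inner product space, `a` a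
coercive bilinear form, `I_H` a linear projection with range `V_H` and kernel `R_H`, and
`C` the corrector assigning to `v` the unique `C v ∈ R_H` with `a w (C v) = a w v` for all
`w ∈ R_H`), the map `v ↦ v − C v` restricted to `V_H` is an injective linear map with range
exactly `W_H`; moreover `I_H (v − C v) = v` for every `v ∈ V_H`. In particular `W_H` and
`V_H` have the same finite dimension. -/
theorem idealTestSpace_properties
    {V_h : Type*} [NormedAddCommGroup V_h] [InnerProductSpace ℝ V_h]
    [FiniteDimensional ℝ V_h]
    (a : V_h →ₗ[ℝ] V_h →ₗ[ℝ] ℝ)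
    (ε : ℝ) (hε : 0 < ε) (hcoer : ∀ v : V_h, ε * ‖v‖ ^ 2 ≤ a v v)
    (I_H : V_h →ₗ[ℝ] V_h) (hproj : I_H ∘ₗ I_H = I_H)
    (C : V_h → V_h)
    (hC_mem : ∀ v : V_h, C v ∈ LinearMap.ker I_H)
    (hC : ∀ v : V_h, ∀ w ∈ LinearMap.ker I_H, a w (C v) = a w v) :
    -- injectivity of `v ↦ v − C v` on `V_H`
    (∀ v₁ ∈ LinearMap.range I_H, ∀ v₂ ∈ LinearMap.range I_H,
        v₁ - C v₁ = v₂ - C v₂ → v₁ = v₂) ∧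
    -- additivity of `v ↦ v − C v` on `V_H`
    (∀ v₁ ∈ LinearMap.range I_H, ∀ v₂ ∈ LinearMap.range I_H,
        (v₁ + v₂) - C (v₁ + v₂) = (v₁ - C v₁) + (v₂ - C v₂)) ∧
    -- homogeneity of `v ↦ v − C v` on `V_H`
    (∀ (c : ℝ), ∀ v ∈ LinearMap.range I_H,
        (c • v) - C (c • v) = c • (v - C v)) ∧
    -- the range of `v ↦ v − C v` on `V_H` is exactly `W_H`
    ({x : V_h | ∃ v ∈ LinearMap.range I_H, v - C v = x}
        = (testSpace a (LinearMap.ker I_H) : Set V_h)) ∧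
    -- `I_H (v − C v) = v` for every `v ∈ V_H`
    (∀ v ∈ LinearMap.range I_H, I_H (v - C v) = v) ∧
    -- `W_H` and `V_H` have the same (finite) dimension
    Module.finrank ℝ (testSpace a (LinearMap.ker I_H))
      = Module.finrank ℝ (LinearMap.range I_H) := by
  obtain ⟨hinj, hadd, hsmul, hrange, hleft, hrank⟩ := idealTestSpace_properties_general a I_H
    (disjoint_testSpace_of_coercive hε _ fun v _ ↦ hcoer v) hproj C hC_mem hC
  exact ⟨hinj, hadd, hsmul, hrange, hleft, congrArg Cardinal.toNat hrank⟩
end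

section
/- In the abstract VMS setup, let F : V_h → ℝ be a linear functional and let u_h ∈ V_h be the unique solution of a(u_h, v) = F(v) for all v ∈ V_h. Then the ideal Petrov–Galerkin problem — find u_H ∈ V_H with a(u_H, w) = F(w) for all w ∈ W_H — has exactly one solution, and this solution is u_H = I_H u_h. -/
/-!
The multiscale test space `W` is the right `a`-orthogonal complement of the fine-scale space
`R = ker I_H`. The correctors split every `v` as `C v + (v - C v) ∈ R + W`, and for a definite form
this forces the left orthogonal complement of `W` to be `R` again: if `c + w` annihilates `W`, then
so does `w`, whence `a w w = 0`. Consequently `u` solves the Petrov–Galerkin problem iff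
`u - u_h ∈ R`, that is iff `I_H u = I_H u_h`, and on the range of `I_H` this reads `u = I_H u_h`.
-/

section OrthogonalBilin

variable {R S M N : Type*} [CommRing R] [CommRing S] [AddCommGroup M] [Module R M]
  [AddCommGroup N] [Module S N] {σ τ : R →+* S} {B : M →ₛₗ[σ] M →ₛₗ[τ] N}

theorem codisjoint_orthogonalBilin_of_corrector {L : Submodule R M} {C : M → M}
    (hC_mem : ∀ v, C v ∈ L) (hC : ∀ v, ∀ x ∈ L, B x (C v) = B x v) :
    Codisjoint L (L.orthogonalBilin B) :=
  Submodule.codisjoint_iff_exists_add_eq.mpr fun v ↦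
    ⟨C v, v - C v, hC_mem v, fun x hx ↦ by simp only [map_sub, hC v x hx, sub_self],
      add_sub_cancel _ _⟩

theorem orthogonalBilin_flip_orthogonalBilin_eq_self (hB : ∀ v, B v v = 0 → v = 0)
    {L : Submodule R M} (hL : Codisjoint L (L.orthogonalBilin B)) :
    (L.orthogonalBilin B).orthogonalBilin B.flip = L := by
  refine le_antisymm (fun e he ↦ ?_) fun x hx w hw ↦ hw x hx
  obtain ⟨c, w, hc, hw, rfl⟩ := Submodule.codisjoint_iff_exists_add_eq.mp hL e
  have hww : B w w = 0 :=
    calc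
      B w w = B c w + B w w := by rw [hw c hc, zero_add]
      _ = B (c + w) w := by rw [map_add, LinearMap.add_apply]
      _ = 0 := he w hw
  rwa [hB w hww, add_zero]

theorem forall_mem_orthogonalBilin_apply_eq_iff_sub_mem (hB : ∀ v, B v v = 0 → v = 0)
    {L : Submodule R M} (hL : Codisjoint L (L.orthogonalBilin B)) {u v : M} :
    (∀ w ∈ L.orthogonalBilin B, B u w = B v w) ↔ u - v ∈ L :=
  calc
    (∀ w ∈ L.orthogonalBilin B, B u w = B v w)
        ↔ u - v ∈ (L.orthogonalBilin B).orthogonalBilin B.flip := by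
      simp only [Submodule.mem_orthogonalBilin_iff (S := L.orthogonalBilin B),
        LinearMap.flip_apply, map_sub, sub_eq_zero]
    _ ↔ u - v ∈ L := by rw [orthogonalBilin_flip_orthogonalBilin_eq_self hB hL]

theorem ideal_method_solution_general (hB : ∀ v, B v v = 0 → v = 0) {P : M →ₗ[R] M}
    (hP : IsIdempotentElem P) (hker : Codisjoint P.ker (P.ker.orthogonalBilin B))
    {F : M → N} {u₀ : M} (hu₀ : ∀ v, B u₀ v = F v) {u : M} :
    (u ∈ P.range ∧ ∀ w ∈ P.ker.orthogonalBilin B, B u w = F w) ↔ u = P u₀ := by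
  simp only [← hu₀, forall_mem_orthogonalBilin_apply_eq_iff_sub_mem hB hker,
    LinearMap.sub_mem_ker_iff, LinearMap.IsIdempotentElem.mem_range_iff hP]
  constructor
  · rintro ⟨hPu, hPu₀⟩
    exact hPu.symm.trans hPu₀
  · rintro rfl
    exact ⟨LinearMap.congr_fun hP u₀, LinearMap.congr_fun hP u₀⟩

end OrthogonalBilin

theorem eq_zero_of_coercive {V : Type*} [NormedAddCommGroup V] {q : V → ℝ} {ε : ℝ} (hε : 0 < ε)
    (hq : ∀ v, ε * ‖v‖ ^ 2 ≤ q v) {v : V} (hv : q v = 0) : v = 0 := by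
  have hsq : ‖v‖ ^ 2 ≤ 0 := nonpos_of_mul_nonpos_right ((hq v).trans_eq hv) hε
  exact norm_eq_zero.mp (sq_nonpos_iff _ |>.mp hsq)

/-- **Unique solvability of the ideal Petrov–Galerkin method.**
In the abstract VMS setup, let `F` be a linear functional on `V_h` and let `u_h` be the
unique solution of `a u_h v = F v` for all `v ∈ V_h`. Then the ideal Petrov–Galerkin
problem — find `u_H ∈ V_H` with `a u_H w = F w` for all `w ∈ W_H` — has exactly one
solution, namely `u_H = I_H u_h`. -/
theorem ideal_method_solution
    {V_h : Type*} [NormedAddCommGroup V_h] [InnerProductSpace ℝ V_h]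
    [FiniteDimensional ℝ V_h]
    (a : V_h →ₗ[ℝ] V_h →ₗ[ℝ] ℝ)
    (ε : ℝ) (hε : 0 < ε) (hcoer : ∀ v : V_h, ε * ‖v‖ ^ 2 ≤ a v v)
    (I_H : V_h →ₗ[ℝ] V_h) (hproj : I_H ∘ₗ I_H = I_H)
    (C : V_h → V_h)
    (hC_mem : ∀ v : V_h, C v ∈ LinearMap.ker I_H)
    (hC : ∀ v : V_h, ∀ w ∈ LinearMap.ker I_H, a w (C v) = a w v)
    (F : V_h →ₗ[ℝ] ℝ)
    (u_h : V_h) (hu_h : ∀ v : V_h, a u_h v = F v) :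
    -- `I_H u_h` belongs to `V_H`, ...
    I_H u_h ∈ LinearMap.range I_H ∧
    -- ... solves the ideal Petrov–Galerkin problem, ...
    (∀ w ∈ testSpace a (LinearMap.ker I_H), a (I_H u_h) w = F w) ∧
    -- ... and is its only solution in `V_H`.
    (∀ u ∈ LinearMap.range I_H,
      (∀ w ∈ testSpace a (LinearMap.ker I_H), a u w = F w) → u = I_H u_h) := by
  have hsol {u : V_h} :
      (u ∈ I_H.range ∧ ∀ w ∈ testSpace a I_H.ker, a u w = F w) ↔ u = I_H u_h :=
    ideal_method_solution_general (fun _ ↦ eq_zero_of_coercive hε hcoer) hproj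
      (codisjoint_orthogonalBilin_of_corrector hC_mem hC) hu_h
  exact ⟨(hsol.mpr rfl).1, (hsol.mpr rfl).2, fun u hu hsolves ↦ hsol.mp ⟨hu, hsolves⟩⟩
end

section
/- Let b, t ∈ ℝ² be orthonormal vectors, m ∈ ℝ², H > 0, 0 < ε ≤ H, and ℓ ∈ ℕ with ℓ ≥ 1. For k ∈ ℕ let S_k ⊆ ℝ² denote the convex hull of the four points m + kH t + kH b, m − kH t + kH b, m + kH t − (kH²/ε) b, m − kH t − (kH²/ε) b. Then there exists a function η : ℝ² → ℝ such that: (i) 0 ≤ η(x) ≤ 1 for all x; (ii) η(x) = 0 for all x ∈ S_{ℓ−1}; (iii) η(x) = 1 for all x ∉ S_ℓ; (iv) η is Lipschitz continuous with Lipschitz constant 2/H; (v) for all x ∈ ℝ² and all s ≥ 0, η(x) − η(x + s b) ≤ s ε / H². -/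
open scoped RealInnerProductSpace

/-!
The rectangles `S k` are the sublevel sets `{x | N (x - m) ≤ k}` of one sublinear functional `N`,
the Minkowski gauge of `S 1 - m`. Clamping `N (x - m) - (ℓ - 1)` to `[0, 1]` therefore gives a
function `η` that vanishes on `S (ℓ - 1)` and equals `1` outside `S ℓ`. By subadditivity
`η x - η y ≤ N (x - y)`, so the two quantitative estimates on `η` are `N v ≤ ‖v‖ / H`, as `S 1 - m`
contains the ball of radius `H` when `ε ≤ H`, and `N (-s b) = s ε / H²`, as `S 1`
extends a distance `H² / ε` upstream.
-/

lemma coe_projIcc_le_coe_projIcc_add {α : Type*} [AddCommGroup α] [LinearOrder α]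
    [IsOrderedAddMonoid α] {a b r r' d : α} (hab : a ≤ b) (hd : 0 ≤ d) (h : r ≤ r' + d) :
    (Set.projIcc a b hab r : α) ≤ Set.projIcc a b hab r' + d := by
  simp only [Set.coe_projIcc, ← max_add_add_right, ← min_add_add_right]
  exact max_le_max (le_add_of_nonneg_right hd) (min_le_min (le_add_of_nonneg_right hd) h)

section OrthoBox

variable {ι E : Type*} [Fintype ι] [NormedAddCommGroup E] [InnerProductSpace ℝ E]

/-- The box with sides parallel to the orthonormal basis `e` that extends from the reference point
`m` a distance `p i` in the direction `e i` and a distance `q i` in the direction `-e i`. -/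
def orthoBox (e : OrthonormalBasis ι ℝ E) (m : E) (p q : ι → ℝ) : Set E :=
  {x | ∀ i, ⟪e i, x - m⟫ ∈ Set.Icc (-q i) (p i)}

/-- For positive `p` and `q`, the Minkowski gauge of `orthoBox e 0 p q`, a sublinear functional. -/
noncomputable def boxGauge (e : OrthonormalBasis ι ℝ E) (p q : ι → ℝ) (v : E) : ℝ :=
  ⨆ i, max (⟪e i, v⟫ / p i) (-⟪e i, v⟫ / q i)

/-- The cut-off function that vanishes on the `c`-fold box around `m` and rises to `1` across the
layer between the `c`-fold and the `(c + 1)`-fold box. -/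
noncomputable def boxCutoff (e : OrthonormalBasis ι ℝ E) (m : E) (p q : ι → ℝ) (c : ℝ) (x : E) :
    ℝ :=
  Set.projIcc (0 : ℝ) 1 zero_le_one (boxGauge e p q (x - m) - c)

variable (e : OrthonormalBasis ι ℝ E) (m : E) {p q : ι → ℝ}

lemma orthoBox_eq_image (p q : ι → ℝ) :
    orthoBox e m p q =
      (fun c : ι → ℝ ↦ m + ∑ i, c i • e i) '' Set.univ.pi fun i ↦ Set.Icc (-q i) (p i) := by
  ext x
  constructor
  · intro hx
    refine ⟨fun i ↦ ⟪e i, x - m⟫, fun i _ ↦ hx i, ?_⟩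
    simp only [e.sum_repr', add_sub_cancel]
  · rintro ⟨c, hc, rfl⟩ i
    simpa only [add_sub_cancel_left, e.orthonormal.inner_right_fintype] using hc i trivial

lemma orthoBox_eq_convexHull (hqp : ∀ i, -q i ≤ p i) :
    orthoBox e m p q =
      convexHull ℝ ((fun c : ι → ℝ ↦ m + ∑ i, c i • e i) '' Set.univ.pi fun i ↦ {-q i, p i}) := by
  let φ : (ι → ℝ) →ᵃ[ℝ] E :=
    AffineMap.const ℝ _ m + (Fintype.linearCombination ℝ e).toAffineMap
  have hφ : ⇑φ = fun c ↦ m + ∑ i, c i • e i := rfl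
  rw [orthoBox_eq_image, ← hφ, ← AffineMap.image_convexHull, convexHull_pi]
  simp only [convexHull_pair, segment_eq_Icc (hqp _)]

lemma boxGauge_nonneg (hp : ∀ i, 0 < p i) (hq : ∀ i, 0 < q i) (v : E) :
    0 ≤ boxGauge e p q v := by
  refine Real.iSup_nonneg fun i ↦ le_max_iff.2 ?_
  rcases le_total 0 ⟪e i, v⟫ with h | h
  · exact .inl (div_nonneg h (hp i).le)
  · exact .inr (div_nonneg (neg_nonneg.2 h) (hq i).le)

lemma boxGauge_le_iff (hp : ∀ i, 0 < p i) (hq : ∀ i, 0 < q i) {k : ℝ} (hk : 0 ≤ k) {v : E} :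
    boxGauge e p q v ≤ k ↔ ∀ i, ⟪e i, v⟫ ∈ Set.Icc (-(k * q i)) (k * p i) := by
  have side_iff (i : ι) : max (⟪e i, v⟫ / p i) (-⟪e i, v⟫ / q i) ≤ k ↔
      ⟪e i, v⟫ ∈ Set.Icc (-(k * q i)) (k * p i) := by
    rw [max_le_iff, div_le_iff₀ (hp i), div_le_iff₀ (hq i), neg_le, and_comm, Set.mem_Icc]
  simp only [← side_iff]
  exact ⟨fun h i ↦ (le_ciSup (Set.finite_range _).bddAbove i).trans h,
    fun h ↦ Real.iSup_le h hk⟩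

lemma boxGauge_add_le (hp : ∀ i, 0 < p i) (hq : ∀ i, 0 < q i) (v w : E) :
    boxGauge e p q (v + w) ≤ boxGauge e p q v + boxGauge e p q w := by
  have hv := boxGauge_nonneg e hp hq v
  have hw := boxGauge_nonneg e hp hq w
  refine (boxGauge_le_iff e hp hq (add_nonneg hv hw)).2 fun i ↦ ?_
  obtain ⟨hv₁, hv₂⟩ := (boxGauge_le_iff e hp hq hv).1 le_rfl i
  obtain ⟨hw₁, hw₂⟩ := (boxGauge_le_iff e hp hq hw).1 le_rfl i
  rw [inner_add_right]
  constructor <;> linarith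

lemma boxGauge_le_inv_mul_norm {r : ℝ} (hr : 0 < r) (hrp : ∀ i, r ≤ p i) (hrq : ∀ i, r ≤ q i)
    (v : E) : boxGauge e p q v ≤ r⁻¹ * ‖v‖ := by
  have norm_le {d : ℝ} (hd : r ≤ d) : ‖v‖ ≤ r⁻¹ * ‖v‖ * d :=
    calc ‖v‖ = r⁻¹ * ‖v‖ * r := by field_simp
      _ ≤ r⁻¹ * ‖v‖ * d := by gcongr
  refine (boxGauge_le_iff e (fun i ↦ hr.trans_le (hrp i)) (fun i ↦ hr.trans_le (hrq i))
    (by positivity)).2 fun i ↦ ?_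
  have inner_le : |⟪e i, v⟫| ≤ ‖v‖ := by
    simpa only [e.norm_eq_one, one_mul] using abs_real_inner_le_norm (e i) v
  obtain ⟨h₁, h₂⟩ := abs_le.1 inner_le
  exact ⟨(neg_le_neg (norm_le (hrq i))).trans h₁, h₂.trans (norm_le (hrp i))⟩

lemma boxGauge_neg_smul_le (hp : ∀ i, 0 < p i) (hq : ∀ i, 0 < q i) (i : ι) {s : ℝ} (hs : 0 ≤ s) :
    boxGauge e p q (-(s • e i)) ≤ s / q i := by
  classical
  have hsq : 0 ≤ s / q i := div_nonneg hs (hq i).le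
  refine (boxGauge_le_iff e hp hq hsq).2 fun j ↦ ?_
  have hp_nonneg := mul_nonneg hsq (hp j).le
  have hq_nonneg := mul_nonneg hsq (hq j).le
  rw [inner_neg_right, real_inner_smul_right, e.inner_eq_ite]
  split_ifs with hji
  · subst hji
    rw [mul_one, div_mul_cancel₀ s (hq j).ne']
    exact ⟨le_rfl, by linarith⟩
  · constructor <;> linarith

lemma boxCutoff_eq_zero (hp : ∀ i, 0 < p i) (hq : ∀ i, 0 < q i) {c : ℝ} (hc : 0 ≤ c) {x : E}
    (hx : x ∈ orthoBox e m (c • p) (c • q)) : boxCutoff e m p q c x = 0 := by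
  have gauge_le : boxGauge e p q (x - m) ≤ c := (boxGauge_le_iff e hp hq hc).2 hx
  rw [boxCutoff, Set.projIcc_of_le_left _ (sub_nonpos.2 gauge_le)]

lemma boxCutoff_eq_one (hp : ∀ i, 0 < p i) (hq : ∀ i, 0 < q i) {c : ℝ} (hc : 0 ≤ c + 1) {x : E}
    (hx : x ∉ orthoBox e m ((c + 1) • p) ((c + 1) • q)) : boxCutoff e m p q c x = 1 := by
  have lt_gauge : c + 1 < boxGauge e p q (x - m) :=
    not_le.1 fun h ↦ hx ((boxGauge_le_iff e hp hq hc).1 h)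
  rw [boxCutoff, Set.projIcc_of_right_le _ (le_sub_iff_add_le'.2 lt_gauge.le)]

lemma boxCutoff_le_add_boxGauge (hp : ∀ i, 0 < p i) (hq : ∀ i, 0 < q i) (c : ℝ) (x y : E) :
    boxCutoff e m p q c x ≤ boxCutoff e m p q c y + boxGauge e p q (x - y) := by
  refine coe_projIcc_le_coe_projIcc_add _ (boxGauge_nonneg e hp hq _) ?_
  have triangle := boxGauge_add_le e hp hq (x - y) (y - m)
  rw [sub_add_sub_cancel] at triangle
  linarith

lemma lipschitzWith_boxCutoff {r : ℝ} (hr : 0 < r) (hrp : ∀ i, r ≤ p i) (hrq : ∀ i, r ≤ q i)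
    (c : ℝ) : LipschitzWith (Real.toNNReal r⁻¹) (boxCutoff e m p q c) := by
  refine .of_le_add_mul _ fun x y ↦ ?_
  rw [Real.coe_toNNReal _ (inv_nonneg.2 hr.le), dist_eq_norm]
  calc boxCutoff e m p q c x ≤ boxCutoff e m p q c y + boxGauge e p q (x - y) :=
        boxCutoff_le_add_boxGauge e m (fun i ↦ hr.trans_le (hrp i))
          (fun i ↦ hr.trans_le (hrq i)) c x y
    _ ≤ boxCutoff e m p q c y + r⁻¹ * ‖x - y‖ := by
        gcongr
        exact boxGauge_le_inv_mul_norm e hr hrp hrq _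

lemma boxCutoff_sub_add_smul_le (hp : ∀ i, 0 < p i) (hq : ∀ i, 0 < q i) (c : ℝ) (i : ι) (x : E)
    {s : ℝ} (hs : 0 ≤ s) :
    boxCutoff e m p q c x - boxCutoff e m p q c (x + s • e i) ≤ s / q i := by
  have cutoff_le := boxCutoff_le_add_boxGauge e m hp hq c x (x + s • e i)
  rw [sub_add_cancel_left] at cutoff_le
  linarith [boxGauge_neg_smul_le e hp hq i hs]

theorem cutoff_exists_general {r : ℝ} (hr : 0 < r) (hrp : ∀ i, r ≤ p i) (hrq : ∀ i, r ≤ q i)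
    {c : ℝ} (hc : 0 ≤ c) :
    ∃ η : E → ℝ,
      (∀ x, 0 ≤ η x ∧ η x ≤ 1) ∧
      (∀ x ∈ orthoBox e m (c • p) (c • q), η x = 0) ∧
      (∀ x ∉ orthoBox e m ((c + 1) • p) ((c + 1) • q), η x = 1) ∧
      LipschitzWith (Real.toNNReal r⁻¹) η ∧
      (∀ i x, ∀ s : ℝ, 0 ≤ s → η x - η (x + s • e i) ≤ s / q i) := by
  have hp (i : ι) : 0 < p i := hr.trans_le (hrp i)
  have hq (i : ι) : 0 < q i := hr.trans_le (hrq i)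
  exact ⟨boxCutoff e m p q c, fun x ↦ (Set.projIcc (0 : ℝ) 1 zero_le_one _).2,
    fun _ ↦ boxCutoff_eq_zero e m hp hq hc, fun _ ↦ boxCutoff_eq_one e m hp hq (by linarith),
    lipschitzWith_boxCutoff e m hr hrp hrq c,
    fun i x _ ↦ boxCutoff_sub_add_smul_le e m hp hq c i x⟩

end OrthoBox

section Plane

variable {E : Type*} [NormedAddCommGroup E] [InnerProductSpace ℝ E]

lemma orthoBox_fin_two_eq_convexHull (e : OrthonormalBasis (Fin 2) ℝ E) (m : E)
    {p q : Fin 2 → ℝ} (hqp : ∀ i, -q i ≤ p i) :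
    orthoBox e m p q = convexHull ℝ
      {m + p 1 • e 1 + p 0 • e 0, m - q 1 • e 1 + p 0 • e 0,
       m + p 1 • e 1 - q 0 • e 0, m - q 1 • e 1 - q 0 • e 0} := by
  rw [orthoBox_eq_convexHull e m hqp]
  congr 1
  ext x
  simp only [Set.mem_image, Set.mem_univ_pi, Fin.forall_fin_two, Fin.sum_univ_two,
    Set.mem_insert_iff, Set.mem_singleton_iff]
  constructor
  · rintro ⟨c, ⟨h₀ | h₀, h₁ | h₁⟩, rfl⟩ <;> rw [h₀, h₁]
    · right; right; right; module
    · right; right; left; module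
    · right; left; module
    · left; module
  · rintro (rfl | rfl | rfl | rfl)
    · exact ⟨![p 0, p 1], by simp, by simp; module⟩
    · exact ⟨![p 0, -q 1], by simp, by simp; module⟩
    · exact ⟨![-q 0, p 1], by simp, by simp; module⟩
    · exact ⟨![-q 0, -q 1], by simp, by simp; module⟩

lemma convexHull_eq_orthoBox_smul (e : OrthonormalBasis (Fin 2) ℝ E) (m : E) {H ε k : ℝ}
    (hH : 0 ≤ H) (hε : 0 ≤ ε) (hk : 0 ≤ k) :
    convexHull ℝ
      {m + (k * H) • e 1 + (k * H) • e 0, m - (k * H) • e 1 + (k * H) • e 0,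
       m + (k * H) • e 1 - (k * H ^ 2 / ε) • e 0, m - (k * H) • e 1 - (k * H ^ 2 / ε) • e 0} =
      orthoBox e m (k • ![H, H]) (k • ![H ^ 2 / ε, H]) := by
  have hsides : ∀ i, -(k • ![H ^ 2 / ε, H]) i ≤ (k • ![H, H]) i := by
    simp only [Fin.forall_fin_two, neg_le_iff_add_nonneg, Pi.smul_apply, smul_eq_mul,
      Matrix.cons_val_zero, Matrix.cons_val_one]
    constructor <;> positivity
  rw [orthoBox_fin_two_eq_convexHull e m hsides]
  simp [mul_div_assoc]

lemma exists_orthonormalBasis_fin_two (hE : Module.finrank ℝ E = 2) {b t : E} (hb : ‖b‖ = 1)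
    (ht : ‖t‖ = 1) (hbt : ⟪b, t⟫ = 0) :
    ∃ e : OrthonormalBasis (Fin 2) ℝ E, e 0 = b ∧ e 1 = t := by
  have : FiniteDimensional ℝ E := .of_finrank_pos (by simp [hE])
  have hon : Orthonormal ℝ ![b, t] := by simp [orthonormal_vecCons_iff, hb, ht, hbt]
  obtain ⟨e, he⟩ := Orthonormal.exists_orthonormalBasis_extension_of_card_eq
    (s := Set.univ) (by simpa using hE) (hon.comp _ Subtype.val_injective)
  exact ⟨e, he 0 trivial, he 1 trivial⟩

end Plane

/-- **Existence of the anisotropic cut-off function `η`.**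
Let `b, t ∈ ℝ²` be orthonormal, `m ∈ ℝ²`, `H > 0`, `0 < ε ≤ H`, `ℓ ≥ 1`, and for `k ∈ ℕ`
let `S k` be the convex hull of the four points
`m ± kH t + kH b` and `m ± kH t − (kH²/ε) b`. Then there is `η : ℝ² → ℝ` with
`0 ≤ η ≤ 1`, `η = 0` on `S (ℓ−1)`, `η = 1` outside `S ℓ`, `η` Lipschitz with constant
`2/H`, and `η x − η (x + s b) ≤ s ε / H²` for all `x` and all `s ≥ 0`. -/
theorem cutoff_exists
    (b t : EuclideanSpace ℝ (Fin 2))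
    (hb : ‖b‖ = 1) (ht : ‖t‖ = 1) (hbt : ⟪b, t⟫ = 0)
    (m : EuclideanSpace ℝ (Fin 2))
    (H ε : ℝ) (hH : 0 < H) (hε0 : 0 < ε) (hεH : ε ≤ H)
    (ℓ : ℕ) (hℓ : 1 ≤ ℓ)
    (S : ℕ → Set (EuclideanSpace ℝ (Fin 2)))
    (hS : ∀ k : ℕ, S k = convexHull ℝ
      {m + ((k : ℝ) * H) • t + ((k : ℝ) * H) • b,
       m - ((k : ℝ) * H) • t + ((k : ℝ) * H) • b,
       m + ((k : ℝ) * H) • t - ((k : ℝ) * H ^ 2 / ε) • b,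
       m - ((k : ℝ) * H) • t - ((k : ℝ) * H ^ 2 / ε) • b}) :
    ∃ η : EuclideanSpace ℝ (Fin 2) → ℝ,
      (∀ x, 0 ≤ η x ∧ η x ≤ 1) ∧
      (∀ x ∈ S (ℓ - 1), η x = 0) ∧
      (∀ x ∉ S ℓ, η x = 1) ∧
      LipschitzWith (Real.toNNReal (2 / H)) η ∧
      (∀ x, ∀ s : ℝ, 0 ≤ s → η x - η (x + s • b) ≤ s * ε / H ^ 2) := by
  obtain ⟨e, rfl, rfl⟩ := exists_orthonormalBasis_fin_two (by simp) hb ht hbt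
  have hHε : H ≤ H ^ 2 / ε := (le_div_iff₀ hε0).2 (by nlinarith)
  have hcast : ((ℓ - 1 : ℕ) : ℝ) + 1 = ℓ := by exact_mod_cast Nat.sub_add_cancel hℓ
  have hbox (k : ℕ) : S k = orthoBox e m ((k : ℝ) • ![H, H]) ((k : ℝ) • ![H ^ 2 / ε, H]) :=
    (hS k).trans (convexHull_eq_orthoBox_smul e m hH.le hε0.le k.cast_nonneg)
  obtain ⟨η, hη, hzero, hone, hlip, hdecr⟩ := cutoff_exists_general e m
    (p := ![H, H]) (q := ![H ^ 2 / ε, H]) hH (by simp [Fin.forall_fin_two])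
    (by simp [Fin.forall_fin_two, hHε]) (Nat.cast_nonneg (ℓ - 1))
  refine ⟨η, hη, hbox (ℓ - 1) ▸ hzero, ?_, hlip.weaken ?_, fun x s hs ↦ ?_⟩
  · rw [hbox, ← hcast]
    exact hone
  · rw [← one_div]
    gcongr
    exact one_le_two
  · simpa [div_div_eq_mul_div] using hdecr 0 x s hs
end

section
/- Let V be a real inner product space and a : V × V → ℝ a bilinear form with |a(u,v)| ≤ M‖u‖‖v‖ for all u, v ∈ V, where M ≥ 0. Let V_H, W_H, W' be subspaces of V, let γ > 0 and 0 ≤ δ < 1, and let J : W' → W_H be a linear map with ‖J w − w‖ ≤ δ ‖w‖ for all w ∈ W'. Assume the inf-sup condition: for every w ∈ W_H with w ≠ 0 there exists u ∈ V_H with u ≠ 0 and a(u, w) ≥ γ ‖u‖ ‖w‖. Then for every w ∈ W' with w ≠ 0 there exists u ∈ V_H with u ≠ 0 such that a(u, w) ≥ (γ(1 − δ) − Mδ) ‖u‖ ‖w‖. -/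
section Perturbation

variable {V : Type*} [SeminormedAddCommGroup V] {x y : V} {δ : ℝ}

theorem one_sub_mul_norm_le_norm_of_norm_sub_le (h : ‖y - x‖ ≤ δ * ‖x‖) :
    (1 - δ) * ‖x‖ ≤ ‖y‖ := by
  have triangle : ‖x‖ - ‖y‖ ≤ ‖y - x‖ := norm_sub_rev y x ▸ norm_sub_norm_le x y
  linarith

theorem sub_mul_norm_le_apply_of_norm_sub_le (f : V →+ ℝ) {C γ : ℝ} (hC : 0 ≤ C) (hγ : 0 ≤ γ)
    (hf : ∀ z, f z ≤ C * ‖z‖) (hy : γ * ‖y‖ ≤ f y) (h : ‖y - x‖ ≤ δ * ‖x‖) :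
    (γ * (1 - δ) - C * δ) * ‖x‖ ≤ f x :=
  calc
    (γ * (1 - δ) - C * δ) * ‖x‖ = γ * ((1 - δ) * ‖x‖) - C * (δ * ‖x‖) := by ring
    _ ≤ γ * ‖y‖ - C * ‖y - x‖ := by
      gcongr
      exact one_sub_mul_norm_le_norm_of_norm_sub_le h
    _ ≤ f y - f (y - x) := sub_le_sub hy (hf (y - x))
    _ = f x := by rw [map_sub, sub_sub_cancel]

end Perturbation

theorem ne_zero_of_norm_sub_le_mul_norm {V : Type*} [NormedAddCommGroup V] {x y : V} {δ : ℝ}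
    (hδ : δ < 1) (hx : x ≠ 0) (h : ‖y - x‖ ≤ δ * ‖x‖) : y ≠ 0 :=
  norm_pos_iff.mp <| (mul_pos (sub_pos.mpr hδ) (norm_pos_iff.mpr hx)).trans_le
    (one_sub_mul_norm_le_norm_of_norm_sub_le h)

section InfSup

variable {U V : Type*} [NormedAddCommGroup U] [NormedAddCommGroup V]

/-- The inf-sup condition with constant `γ` for the form `a` on the trial set `S` and the test set
`T`, in the version where every nonzero test vector has a nonzero trial vector realizing the bound.
No supremum is taken, so there is no junk value when the quotients are unbounded or `S ⊆ {0}`. -/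
def InfSupCondition (a : U → V → ℝ) (S : Set U) (T : Set V) (γ : ℝ) : Prop :=
  ∀ w ∈ T, w ≠ 0 → ∃ u ∈ S, u ≠ 0 ∧ γ * ‖u‖ * ‖w‖ ≤ a u w

theorem infSup_perturbation_general (a : U → V →+ ℝ) {S : Set U} {T T' : Set V} {M γ δ : ℝ}
    (hM : 0 ≤ M) (hbound : ∀ u v, a u v ≤ M * ‖u‖ * ‖v‖) (hγ : 0 ≤ γ) (hδ : δ < 1)
    (happrox : ∀ w ∈ T', ∃ v ∈ T, ‖v - w‖ ≤ δ * ‖w‖)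
    (hinfsup : InfSupCondition (fun u v ↦ a u v) S T γ) :
    InfSupCondition (fun u v ↦ a u v) S T' (γ * (1 - δ) - M * δ) := by
  intro w hw hw0
  obtain ⟨v, hv, hvw⟩ := happrox w hw
  obtain ⟨u, hu, hu0, huv⟩ := hinfsup v hv (ne_zero_of_norm_sub_le_mul_norm hδ hw0 hvw)
  refine ⟨u, hu, hu0, ?_⟩
  calc
    (γ * (1 - δ) - M * δ) * ‖u‖ * ‖w‖ = (γ * ‖u‖ * (1 - δ) - M * ‖u‖ * δ) * ‖w‖ := by ring
    _ ≤ a u w :=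
      sub_mul_norm_le_apply_of_norm_sub_le (a u) (by positivity) (by positivity) (hbound u) huv hvw

end InfSup

/-- **Perturbation of the inf-sup condition.**
Let `V` be a real inner product space and `a` a bilinear form with `|a u v| ≤ M‖u‖‖v‖`.
Let `V_H, W_H, W'` be subspaces, `γ > 0`, `0 ≤ δ < 1`, and `J : W' → W_H` a linear map
with `‖J w − w‖ ≤ δ ‖w‖` for all `w ∈ W'`. If for every `0 ≠ w ∈ W_H` there exists
`0 ≠ u ∈ V_H` with `a u w ≥ γ‖u‖‖w‖`, then for every `0 ≠ w ∈ W'` there exists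
`0 ≠ u ∈ V_H` with `a u w ≥ (γ(1 − δ) − Mδ)‖u‖‖w‖`. -/
theorem infSup_perturbation
    {V : Type*} [NormedAddCommGroup V] [InnerProductSpace ℝ V]
    (a : V →ₗ[ℝ] V →ₗ[ℝ] ℝ)
    (M : ℝ) (hM : 0 ≤ M) (hbound : ∀ u v : V, |a u v| ≤ M * ‖u‖ * ‖v‖)
    (V_H W_H W' : Submodule ℝ V)
    (γ δ : ℝ) (hγ : 0 < γ) (hδ0 : 0 ≤ δ) (hδ1 : δ < 1)
    (J : W' →ₗ[ℝ] W_H)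
    (hJ : ∀ w : W', ‖(J w : V) - (w : V)‖ ≤ δ * ‖(w : V)‖)
    (hinfsup : ∀ w ∈ W_H, w ≠ 0 →
      ∃ u ∈ V_H, u ≠ 0 ∧ γ * ‖u‖ * ‖w‖ ≤ a u w) :
    ∀ w : W', (w : V) ≠ 0 →
      ∃ u ∈ V_H, u ≠ 0 ∧
        (γ * (1 - δ) - M * δ) * ‖u‖ * ‖(w : V)‖ ≤ a u (w : V) := by
  intro w
  exact infSup_perturbation_general (fun u ↦ (a u).toAddMonoidHom) hM
    (fun u v ↦ le_of_abs_le (hbound u v)) hγ.le hδ1 (fun w hw ↦ ⟨J ⟨w, hw⟩, (J _).2, hJ ⟨w, hw⟩⟩)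
    hinfsup w w.2
end

section
/- Let V be a finite-dimensional real inner product space, a : V × V → ℝ a bilinear form with |a(u,v)| ≤ M‖u‖‖v‖ for all u, v ∈ V (M ≥ 0), and F : V → ℝ a linear functional. Let V_H, W_H, W' be subspaces of V, let γ > 0 and δ ≥ 0, and let T : W' → W_H be a linear map with ‖w − T w‖ ≤ δ ‖w‖ for all w ∈ W'. Let u_h ∈ V satisfy a(u_h, v) = F(v) for all v ∈ V; let u_H ∈ V_H satisfy a(u_H, w) = F(w) for all w ∈ W_H; and let u' ∈ V_H satisfy a(u', w) = F(w) for all w ∈ W'. Assume the inf-sup condition: for every v ∈ V_H with v ≠ 0 there exists w ∈ W' with w ≠ 0 and a(v, w) ≥ γ ‖v‖ ‖w‖. Then ‖u_H − u'‖ ≤ (M δ / γ) ‖u_h − u_H‖. -/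
/-!
Since `u_h`, `u_H` and `u'` solve the same equation against different test spaces,
`a (u_H - u') w = a (u_H - u_h) w` for `w ∈ W'`, and Petrov–Galerkin orthogonality allows
subtracting from `w` any nearby `w₀ ∈ W_H` on the right. The residual of `u_H - u'` is thus
of size `M * δ * ‖u_H - u_h‖ * ‖w‖`, and the inf-sup condition turns it into a norm bound.
-/

theorem apply_sub_eq_apply_sub_sub {R X Y : Type*} [CommRing R] [AddCommGroup X] [Module R X]
    [AddCommGroup Y] [Module R Y] {σ : R →+* R} {a : X →ₗ[R] Y →ₛₗ[σ] R} {u p q : X} {w w₀ : Y}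
    (hp : a p w₀ = a u w₀) (hq : a q w = a u w) :
    a (p - q) w = a (p - u) (w - w₀) := by
  have orthogonality : a (p - u) w₀ = 0 := by rw [LinearMap.map_sub₂, hp, sub_self]
  calc a (p - q) w = a (p - u) w := by rw [LinearMap.map_sub₂, LinearMap.map_sub₂, hq]
    _ = a (p - u) (w - w₀) := by rw [(a (p - u)).map_sub, orthogonality, sub_zero]

section PetrovGalerkin

variable {𝕜 X Y : Type*} [NormedField 𝕜] [SeminormedAddCommGroup X] [Module 𝕜 X]
  [NormedAddCommGroup Y] [Module 𝕜 Y] {σ : 𝕜 →+* 𝕜} {a : X →ₗ[𝕜] Y →ₛₗ[σ] 𝕜}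

/-- The inf-sup (Babuška) condition with constant `γ` for the trial space `V` and the test space
`W`, with the supremum over `W` replaced by a single `w` realizing the lower bound; the map `σ`
covers both bilinear and sesquilinear forms. -/
def SatisfiesInfSup (a : X →ₗ[𝕜] Y →ₛₗ[σ] 𝕜) (V : Submodule 𝕜 X) (W : Submodule 𝕜 Y)
    (γ : ℝ) : Prop :=
  ∀ v ∈ V, v ≠ 0 → ∃ w ∈ W, w ≠ 0 ∧ γ * ‖v‖ * ‖w‖ ≤ ‖a v w‖

theorem SatisfiesInfSup.norm_le_div {V : Submodule 𝕜 X} {W : Submodule 𝕜 Y} {γ C : ℝ}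
    (h : SatisfiesInfSup a V W γ) (hγ : 0 < γ) (hC : 0 ≤ C) {v : X} (hv : v ∈ V)
    (hvC : ∀ w ∈ W, ‖a v w‖ ≤ C * ‖w‖) : ‖v‖ ≤ C / γ := by
  rcases eq_or_ne v 0 with rfl | hv0
  · rw [norm_zero]
    positivity
  obtain ⟨w, hw, hw0, hvw⟩ := h v hv hv0
  have hγv : γ * ‖v‖ ≤ C :=
    le_of_mul_le_mul_right (hvw.trans (hvC w hw)) (norm_pos_iff.mpr hw0)
  exact (le_div_iff₀' hγ).mpr hγv

theorem norm_apply_sub_le {M δ : ℝ} (hM : 0 ≤ M) (ha : ∀ x y, ‖a x y‖ ≤ M * ‖x‖ * ‖y‖)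
    {u p q : X} {w w₀ : Y} (hp : a p w₀ = a u w₀) (hq : a q w = a u w)
    (hw : ‖w - w₀‖ ≤ δ * ‖w‖) :
    ‖a (p - q) w‖ ≤ M * δ * ‖u - p‖ * ‖w‖ :=
  calc ‖a (p - q) w‖ = ‖a (p - u) (w - w₀)‖ := by rw [apply_sub_eq_apply_sub_sub hp hq]
    _ ≤ M * ‖p - u‖ * ‖w - w₀‖ := ha _ _
    _ ≤ M * ‖p - u‖ * (δ * ‖w‖) := by gcongr
    _ = M * δ * ‖u - p‖ * ‖w‖ := by rw [norm_sub_rev]; ring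

theorem localization_error_general {V_H : Submodule 𝕜 X} {W_H W' : Submodule 𝕜 Y} {M γ δ : ℝ}
    (hM : 0 ≤ M) (ha : ∀ x y, ‖a x y‖ ≤ M * ‖x‖ * ‖y‖) (hγ : 0 < γ) (hδ : 0 ≤ δ)
    (hW : ∀ w ∈ W', ∃ w₀ ∈ W_H, ‖w - w₀‖ ≤ δ * ‖w‖) {u_h u_H u' : X}
    (hu_H_mem : u_H ∈ V_H) (hu_H : ∀ w ∈ W_H, a u_H w = a u_h w)
    (hu'_mem : u' ∈ V_H) (hu' : ∀ w ∈ W', a u' w = a u_h w)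
    (hinfsup : SatisfiesInfSup a V_H W' γ) :
    ‖u_H - u'‖ ≤ M * δ / γ * ‖u_h - u_H‖ := by
  have residual_le : ∀ w ∈ W', ‖a (u_H - u') w‖ ≤ M * δ * ‖u_h - u_H‖ * ‖w‖ := by
    intro w hw
    obtain ⟨w₀, hw₀, hww₀⟩ := hW w hw
    exact norm_apply_sub_le hM ha (hu_H w₀ hw₀) (hu' w hw) hww₀
  rw [div_mul_eq_mul_div]
  exact hinfsup.norm_le_div hγ (by positivity) (V_H.sub_mem hu_H_mem hu'_mem) residual_le

end PetrovGalerkin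

/-- **Abstract localization-error lemma.**
Let `V` be a finite-dimensional real inner product space, `a` a bilinear form with
`|a u v| ≤ M‖u‖‖v‖`, and `F` a linear functional. Let `V_H, W_H, W'` be subspaces,
`γ > 0`, `δ ≥ 0`, and `T : W' → W_H` linear with `‖w − T w‖ ≤ δ‖w‖`. Let `u_h` solve
`a u_h v = F v` on `V`, `u_H ∈ V_H` solve against `W_H`, and `u' ∈ V_H` solve against
`W'`. If for every `0 ≠ v ∈ V_H` there is `0 ≠ w ∈ W'` with `a v w ≥ γ‖v‖‖w‖`, then
`‖u_H − u'‖ ≤ (Mδ/γ) ‖u_h − u_H‖`. -/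
theorem localization_error
    {V : Type*} [NormedAddCommGroup V] [InnerProductSpace ℝ V] [FiniteDimensional ℝ V]
    (a : V →ₗ[ℝ] V →ₗ[ℝ] ℝ)
    (M : ℝ) (hM : 0 ≤ M) (hbound : ∀ u v : V, |a u v| ≤ M * ‖u‖ * ‖v‖)
    (F : V →ₗ[ℝ] ℝ)
    (V_H W_H W' : Submodule ℝ V)
    (γ δ : ℝ) (hγ : 0 < γ) (hδ : 0 ≤ δ)
    (T : W' →ₗ[ℝ] W_H)
    (hT : ∀ w : W', ‖(w : V) - (T w : V)‖ ≤ δ * ‖(w : V)‖)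
    (u_h : V) (hu_h : ∀ v : V, a u_h v = F v)
    (u_H : V) (hu_H_mem : u_H ∈ V_H) (hu_H : ∀ w ∈ W_H, a u_H w = F w)
    (u' : V) (hu'_mem : u' ∈ V_H) (hu' : ∀ w ∈ W', a u' w = F w)
    (hinfsup : ∀ v ∈ V_H, v ≠ 0 →
      ∃ w : W', (w : V) ≠ 0 ∧ γ * ‖v‖ * ‖(w : V)‖ ≤ a v (w : V)) :
    ‖u_H - u'‖ ≤ M * δ / γ * ‖u_h - u_H‖ := by
  have hinfsup' : SatisfiesInfSup a V_H W' γ := fun v hv hv0 ↦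
    let ⟨w, hw0, hvw⟩ := hinfsup v hv hv0
    ⟨w, w.2, hw0, hvw.trans (le_abs_self _)⟩
  exact localization_error_general (a := a) hM hbound hγ hδ
    (fun w hw ↦ ⟨T ⟨w, hw⟩, (T ⟨w, hw⟩).2, hT ⟨w, hw⟩⟩)
    hu_H_mem (fun w hw ↦ (hu_H w hw).trans (hu_h w).symm)
    hu'_mem (fun w hw ↦ (hu' w hw).trans (hu_h w).symm) hinfsup'
end

section
/- In the abstract VMS setup, assume additionally: C_I > 0 satisfies ‖I_H v‖ ≤ C_I ‖v‖ for all v ∈ V_h; |a(u,v)| ≤ M‖u‖‖v‖ for all u, v ∈ V_h (M ≥ 0); W' is a subspace of V_h; γ > 0 and δ ≥ 0; T : W' → W_H is a linear map with ‖w − T w‖ ≤ δ ‖w‖ for all w ∈ W'; and for every v ∈ V_H with v ≠ 0 there exists w ∈ W' with w ≠ 0 and a(v, w) ≥ γ ‖v‖ ‖w‖. Let F : V_h → ℝ be a linear functional, let u_h ∈ V_h satisfy a(u_h, v) = F(v) for all v ∈ V_h, and let u' ∈ V_H satisfy a(u', w) = F(w) for all w ∈ W'. Then for every v_H ∈ V_H,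 ‖u_h − u'‖ ≤ (1 + M δ / γ)(1 + C_I) ‖u_h − v_H‖. -/
/-! The error splits as `u_h - u' = (u_h - I_H u_h) - (u' - I_H u_h)`. The first part is
quasi-optimal with constant `1 + C_I` because `I_H` fixes `V_H`. For the second,
`e = u_h - I_H u_h` lies in `ker I_H` and is therefore annihilated by `T w`, so subtracting the two
variational problems gives `a (u' - I_H u_h) w = a e w = a e (w - T w)`, of size at most
`M δ ‖e‖ ‖w‖`; the inf-sup condition turns this into `‖u' - I_H u_h‖ ≤ (M δ / γ) ‖e‖`. -/

theorem norm_sub_apply_le_of_isIdempotentElem {R V : Type*} [Ring R] [SeminormedAddCommGroup V]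
    [Module R V] {P : V →ₗ[R] V} (hP : IsIdempotentElem P) {c : ℝ} (hc : ∀ v, ‖P v‖ ≤ c * ‖v‖)
    (u : V) {v : V} (hv : v ∈ LinearMap.range P) :
    ‖u - P u‖ ≤ (1 + c) * ‖u - v‖ := by
  have hPv : P v = v := (LinearMap.IsIdempotentElem.mem_range_iff hP).mp hv
  calc ‖u - P u‖ = ‖(u - v) - P (u - v)‖ := by rw [map_sub, hPv, sub_sub_sub_cancel_right]
    _ ≤ ‖u - v‖ + ‖P (u - v)‖ := norm_sub_le _ _
    _ ≤ ‖u - v‖ + c * ‖u - v‖ := by gcongr; exact hc _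
    _ = (1 + c) * ‖u - v‖ := by ring

section InfSup

variable {𝕜 V E : Type*} [NormedField 𝕜] {σ : 𝕜 →+* 𝕜}
  [NormedAddCommGroup V] [Module 𝕜 V] [NormedAddCommGroup E] [Module 𝕜 E]

/-- The inf-sup (Babuška–Brezzi) condition with constant `γ` for a form `a` on a trial space `X` and
a test space `Y`. It is stated with a witness `w` for each `v` instead of a supremum over `Y`, and
with a form that is semilinear in the test variable, so as to include complex problems. -/
def IsInfSupStable (a : V →ₗ[𝕜] E →ₛₗ[σ] 𝕜) (X : Submodule 𝕜 V) (Y : Submodule 𝕜 E) (γ : ℝ) :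
    Prop :=
  ∀ v ∈ X, v ≠ 0 → ∃ w : Y, (w : E) ≠ 0 ∧ γ * ‖v‖ * ‖(w : E)‖ ≤ ‖a v w‖

variable {a : V →ₗ[𝕜] E →ₛₗ[σ] 𝕜} {X : Submodule 𝕜 V} {Y : Submodule 𝕜 E} {γ M δ : ℝ}

theorem IsInfSupStable.mul_norm_le (h : IsInfSupStable a X Y γ) {v : V} (hv : v ∈ X) {c : ℝ}
    (hc : 0 ≤ c) (hle : ∀ w : Y, ‖a v w‖ ≤ c * ‖(w : E)‖) : γ * ‖v‖ ≤ c := by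
  rcases eq_or_ne v 0 with rfl | hv0
  · simpa using hc
  · obtain ⟨w, hw0, hw⟩ := h v hv hv0
    exact le_of_mul_le_mul_right (hw.trans (hle w)) (norm_pos_iff.mpr hw0)

theorem IsInfSupStable.norm_sub_le_of_test_perturbation (h : IsInfSupStable a X Y γ) (hγ : 0 < γ)
    (hM : 0 ≤ M) (ha : ∀ v w, ‖a v w‖ ≤ M * ‖v‖ * ‖w‖) (hδ : 0 ≤ δ) {T : Y → E}
    (hT : ∀ w : Y, ‖(w : E) - T w‖ ≤ δ * ‖(w : E)‖) {u u₀ u' : V} (hu₀ : u₀ ∈ X)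
    (horth : ∀ w, a (u - u₀) (T w) = 0) (hu'_mem : u' ∈ X) (hu' : ∀ w : Y, a u' w = a u w) :
    ‖u' - u₀‖ ≤ M * δ / γ * ‖u - u₀‖ := by
  have residual (w : Y) : a (u' - u₀) w = a (u - u₀) (w - T w) := by
    rw [map_sub (a (u - u₀)), horth, sub_zero, map_sub, map_sub, LinearMap.sub_apply,
      LinearMap.sub_apply, hu']
  have residual_le (w : Y) : ‖a (u' - u₀) w‖ ≤ M * δ * ‖u - u₀‖ * ‖(w : E)‖ :=
    calc ‖a (u' - u₀) w‖ = ‖a (u - u₀) (w - T w)‖ := by rw [residual]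
      _ ≤ M * ‖u - u₀‖ * ‖(w : E) - T w‖ := ha _ _
      _ ≤ M * ‖u - u₀‖ * (δ * ‖(w : E)‖) := by gcongr; exact hT w
      _ = M * δ * ‖u - u₀‖ * ‖(w : E)‖ := by ring
  rw [div_mul_eq_mul_div, le_div_iff₀' hγ]
  exact h.mul_norm_le (X.sub_mem hu'_mem hu₀) (by positivity) residual_le

theorem localized_vms_global_error_general {P : V →ₗ[𝕜] V} (hP : IsIdempotentElem P) {c : ℝ}
    (hc : ∀ v, ‖P v‖ ≤ c * ‖v‖) (hM : 0 ≤ M) (ha : ∀ v w, ‖a v w‖ ≤ M * ‖v‖ * ‖w‖)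
    (hγ : 0 < γ) (h : IsInfSupStable a (LinearMap.range P) Y γ) (hδ : 0 ≤ δ) {T : Y → E}
    (hT_orth : ∀ w, ∀ v ∈ LinearMap.ker P, a v (T w) = 0)
    (hT : ∀ w : Y, ‖(w : E) - T w‖ ≤ δ * ‖(w : E)‖) {u u' : V}
    (hu'_mem : u' ∈ LinearMap.range P) (hu' : ∀ w : Y, a u' w = a u w)
    {v : V} (hv : v ∈ LinearMap.range P) :
    ‖u - u'‖ ≤ (1 + M * δ / γ) * (1 + c) * ‖u - v‖ := by
  have hker : u - P u ∈ LinearMap.ker P := by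
    rw [LinearMap.mem_ker, map_sub, ← Module.End.mul_apply, hP.eq, sub_self]
  have localization_error : ‖u' - P u‖ ≤ M * δ / γ * ‖u - P u‖ :=
    h.norm_sub_le_of_test_perturbation hγ hM ha hδ hT (LinearMap.mem_range_self P u)
      (fun w => hT_orth w _ hker) hu'_mem hu'
  calc ‖u - u'‖ = ‖(u - P u) - (u' - P u)‖ := by rw [sub_sub_sub_cancel_right]
    _ ≤ ‖u - P u‖ + ‖u' - P u‖ := norm_sub_le _ _
    _ ≤ ‖u - P u‖ + M * δ / γ * ‖u - P u‖ := by gcongr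
    _ = (1 + M * δ / γ) * ‖u - P u‖ := by ring
    _ ≤ (1 + M * δ / γ) * ((1 + c) * ‖u - v‖) := by
      gcongr
      exact norm_sub_apply_le_of_isIdempotentElem hP hc u hv
    _ = (1 + M * δ / γ) * (1 + c) * ‖u - v‖ := by ring

end InfSup

/-- **Global error estimate for the localized VMS method (abstract form).**
In the abstract VMS setup, assume in addition: `‖I_H v‖ ≤ C_I ‖v‖`; boundedness
`|a u v| ≤ M‖u‖‖v‖`; a subspace `W' ⊆ V_h`; constants `γ > 0`, `δ ≥ 0`; a linear
comparison map `T : W' → W_H` with defect `‖w − T w‖ ≤ δ‖w‖`; and the inf-sup condition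
for the pairing `(V_H, W')`. Let `u_h` solve `a u_h v = F v` on `V_h` and let `u' ∈ V_H`
solve the localized Petrov–Galerkin problem `a u' w = F w` for all `w ∈ W'`. Then for
every `v_H ∈ V_H`, `‖u_h − u'‖ ≤ (1 + Mδ/γ)(1 + C_I) ‖u_h − v_H‖`. -/
theorem localized_vms_global_error
    {V_h : Type*} [NormedAddCommGroup V_h] [InnerProductSpace ℝ V_h]
    [FiniteDimensional ℝ V_h]
    (a : V_h →ₗ[ℝ] V_h →ₗ[ℝ] ℝ)
    (ε : ℝ) (hε : 0 < ε) (hcoer : ∀ v : V_h, ε * ‖v‖ ^ 2 ≤ a v v)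
    (I_H : V_h →ₗ[ℝ] V_h) (hproj : I_H ∘ₗ I_H = I_H)
    (C : V_h → V_h)
    (hC_mem : ∀ v : V_h, C v ∈ LinearMap.ker I_H)
    (hC : ∀ v : V_h, ∀ w ∈ LinearMap.ker I_H, a w (C v) = a w v)
    (C_I : ℝ) (hCI : 0 < C_I) (hI_bound : ∀ v : V_h, ‖I_H v‖ ≤ C_I * ‖v‖)
    (M : ℝ) (hM : 0 ≤ M) (hbound : ∀ u v : V_h, |a u v| ≤ M * ‖u‖ * ‖v‖)
    (W' : Submodule ℝ V_h)
    (γ δ : ℝ) (hγ : 0 < γ) (hδ : 0 ≤ δ)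
    (T : W' →ₗ[ℝ] V_h)
    (hT_mem : ∀ w : W', T w ∈ testSpace a (LinearMap.ker I_H))
    (hT : ∀ w : W', ‖(w : V_h) - T w‖ ≤ δ * ‖(w : V_h)‖)
    (hinfsup : ∀ v ∈ LinearMap.range I_H, v ≠ 0 →
      ∃ w : W', (w : V_h) ≠ 0 ∧ γ * ‖v‖ * ‖(w : V_h)‖ ≤ a v (w : V_h))
    (F : V_h →ₗ[ℝ] ℝ)
    (u_h : V_h) (hu_h : ∀ v : V_h, a u_h v = F v)
    (u' : V_h) (hu'_mem : u' ∈ LinearMap.range I_H)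
    (hu' : ∀ w : W', a u' (w : V_h) = F w) :
    ∀ v_H ∈ LinearMap.range I_H,
      ‖u_h - u'‖ ≤ (1 + M * δ / γ) * (1 + C_I) * ‖u_h - v_H‖ := by
  have hstable : IsInfSupStable a (LinearMap.range I_H) W' γ := fun v hv hv0 =>
    (hinfsup v hv hv0).imp fun _ hw => hw.imp_right fun h => h.trans (le_abs_self _)
  exact fun _ => localized_vms_global_error_general hproj hI_bound hM hbound hγ hstable hδ hT_mem hT
    hu'_mem fun w => (hu' w).trans (hu_h w).symm
end
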